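/- arXiv:1904.04064 — 4 statements merged into one kernel-verified Lean document; each statement's English description precedes it below -/
import Mathlib

section
/- For any two Pythagorean fuzzy numbers N, M ∈ L, N ≤_(SF,AF) M if and only if N ≤_(ES,m) M. -/
/-- The set `L` of Pythagorean fuzzy numbers, as a predicate on pairs of reals. -/
def IsPFN (N : ℝ × ℝ) : Prop :=
  N.1 ∈ Set.Icc (0:ℝ) 1 ∧ N.2 ∈ Set.Icc (0:ℝ) 1 ∧ N.1^2 + N.2^2 ≤ 1

/-- The score function. -/
def SF (N : ℝ × ℝ) : ℝ := N.1^2 - N.2^2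

/-- The accuracy function. -/
def AF (N : ℝ × ℝ) : ℝ := N.1^2 + N.2^2

/-- The expectation score function. -/
noncomputable def ES (N : ℝ × ℝ) : ℝ := (N.1^2 - N.2^2 + 1) / 2

/-- The relation `≤_(SF,AF)`. -/
def leSFAF (N M : ℝ × ℝ) : Prop := SF N < SF M ∨ (SF N = SF M ∧ AF N ≤ AF M)

/-- The relation `≤_(ES,m)`. -/
noncomputable def leESm (N M : ℝ × ℝ) : Prop := ES N < ES M ∨ (ES N = ES M ∧ N.1 ≤ M.1)

theorem ES_eq_SF_add_one_div_two (N : ℝ × ℝ) : ES N = (SF N + 1) / 2 := rfl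

theorem ES_lt_ES_iff_SF_lt_SF {N M : ℝ × ℝ} : ES N < ES M ↔ SF N < SF M := by
  rw [ES_eq_SF_add_one_div_two, ES_eq_SF_add_one_div_two, div_lt_div_iff_of_pos_right two_pos,
    add_lt_add_iff_right]

theorem ES_eq_ES_iff_SF_eq_SF {N M : ℝ × ℝ} : ES N = ES M ↔ SF N = SF M := by
  rw [ES_eq_SF_add_one_div_two, ES_eq_SF_add_one_div_two, div_left_inj' two_ne_zero,
    add_left_inj]

theorem SF_add_AF (N : ℝ × ℝ) : SF N + AF N = 2 * N.1 ^ 2 := by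
  unfold SF AF
  ring

theorem AF_le_AF_iff_fst_le_fst {N M : ℝ × ℝ} (hN : 0 ≤ N.1) (hM : 0 ≤ M.1)
    (hSF : SF N = SF M) : AF N ≤ AF M ↔ N.1 ≤ M.1 :=
  calc AF N ≤ AF M ↔ SF N + AF N ≤ SF M + AF M := by rw [hSF, add_le_add_iff_left]
    _ ↔ N.1 ^ 2 ≤ M.1 ^ 2 := by rw [SF_add_AF, SF_add_AF, mul_le_mul_iff_right₀ two_pos]
    _ ↔ N.1 ≤ M.1 := sq_le_sq₀ hN hM

theorem leSFAF_iff_leESm_general (N M : ℝ × ℝ) (hN : 0 ≤ N.1) (hM : 0 ≤ M.1) :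
    leSFAF N M ↔ leESm N M :=
  calc leSFAF N M ↔ SF N < SF M ∨ (SF N = SF M ∧ N.1 ≤ M.1) :=
        or_congr_right (and_congr_right (AF_le_AF_iff_fst_le_fst hN hM))
    _ ↔ leESm N M :=
        or_congr ES_lt_ES_iff_SF_lt_SF.symm (and_congr_left' ES_eq_ES_iff_SF_eq_SF.symm)

/-- `N ≤_(SF,AF) M` iff `N ≤_(ES,m) M` for Pythagorean fuzzy numbers. -/
theorem leSFAF_iff_leESm (N M : ℝ × ℝ) (hN : IsPFN N) (hM : IsPFN M) :
    leSFAF N M ↔ leESm N M :=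
  leSFAF_iff_leESm_general N M hN.1.1 hM.1.1
end

section
/- For Pythagorean fuzzy numbers M = (m_M, n_M), N = (m_N, n_N) in L and any real α > 0, scalar multiplication distributes over Pythagorean addition: α·(M +_P N) = (α·M) +_P (α·N), i.e. the two pairs of real numbers agree componentwise. -/
/-- Pythagorean addition `M +_P N`. -/
noncomputable def pfAdd (M N : ℝ × ℝ) : ℝ × ℝ :=
  (Real.sqrt (M.1^2 + N.1^2 - M.1^2 * N.1^2), M.2 * N.2)

/-- Scalar multiplication `α · N` of a Pythagorean fuzzy number (real exponents). -/
noncomputable def pfSmul (α : ℝ) (N : ℝ × ℝ) : ℝ × ℝ :=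
  (Real.sqrt (1 - (1 - N.1^2) ^ α), N.2 ^ α)

/-!
In the coordinate `1 - m ^ 2`, Pythagorean addition is multiplication and scalar multiplication by
`α` is the power `α`; in the coordinate `n` this holds by definition. Distributivity is therefore
the identity `(a * b) ^ α = a ^ α * b ^ α` in both coordinates.
-/

theorem pfAdd_fst (M N : ℝ × ℝ) :
    (pfAdd M N).1 = √(1 - (1 - M.1 ^ 2) * (1 - N.1 ^ 2)) :=
  congrArg Real.sqrt (by ring)

theorem one_sub_pfAdd_fst_sq (M : ℝ × ℝ) {N : ℝ × ℝ} (hN : N.1 ^ 2 ≤ 1) :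
    1 - (pfAdd M N).1 ^ 2 = (1 - M.1 ^ 2) * (1 - N.1 ^ 2) := by
  have h : (1 - M.1 ^ 2) * (1 - N.1 ^ 2) ≤ 1 :=
    mul_le_one₀ (sub_le_self 1 (sq_nonneg _)) (sub_nonneg.2 hN) (sub_le_self 1 (sq_nonneg _))
  rw [pfAdd_fst, Real.sq_sqrt (sub_nonneg.2 h), sub_sub_cancel]

theorem one_sub_pfSmul_fst_sq {α : ℝ} (hα : 0 ≤ α) {N : ℝ × ℝ} (hN : N.1 ^ 2 ≤ 1) :
    1 - (pfSmul α N).1 ^ 2 = (1 - N.1 ^ 2) ^ α := by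
  have h : (1 - N.1 ^ 2) ^ α ≤ 1 :=
    Real.rpow_le_one (sub_nonneg.2 hN) (sub_le_self 1 (sq_nonneg _)) hα
  rw [pfSmul, Real.sq_sqrt (sub_nonneg.2 h), sub_sub_cancel]

theorem pfSmul_pfAdd_fst {M N : ℝ × ℝ} (hM : M.1 ^ 2 ≤ 1) (hN : N.1 ^ 2 ≤ 1) {α : ℝ}
    (hα : 0 ≤ α) : (pfSmul α (pfAdd M N)).1 = (pfAdd (pfSmul α M) (pfSmul α N)).1 :=
  calc
    (pfSmul α (pfAdd M N)).1 = √(1 - (1 - (pfAdd M N).1 ^ 2) ^ α) := rfl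
    _ = √(1 - ((1 - M.1 ^ 2) * (1 - N.1 ^ 2)) ^ α) := by rw [one_sub_pfAdd_fst_sq M hN]
    _ = √(1 - (1 - M.1 ^ 2) ^ α * (1 - N.1 ^ 2) ^ α) := by
      rw [Real.mul_rpow (sub_nonneg.2 hM) (sub_nonneg.2 hN)]
    _ = √(1 - (1 - (pfSmul α M).1 ^ 2) * (1 - (pfSmul α N).1 ^ 2)) := by
      rw [one_sub_pfSmul_fst_sq hα hM, one_sub_pfSmul_fst_sq hα hN]
    _ = (pfAdd (pfSmul α M) (pfSmul α N)).1 := (pfAdd_fst _ _).symm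

theorem pfSmul_pfAdd_general {M N : ℝ × ℝ} (hM₁ : M.1 ^ 2 ≤ 1) (hM₂ : 0 ≤ M.2)
    (hN₁ : N.1 ^ 2 ≤ 1) (hN₂ : 0 ≤ N.2) {α : ℝ} (hα : 0 ≤ α) :
    pfSmul α (pfAdd M N) = pfAdd (pfSmul α M) (pfSmul α N) :=
  Prod.ext (pfSmul_pfAdd_fst hM₁ hN₁ hα) (Real.mul_rpow hM₂ hN₂)

theorem IsPFN.fst_sq_le_one {N : ℝ × ℝ} (hN : IsPFN N) : N.1 ^ 2 ≤ 1 :=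
  pow_le_one₀ hN.1.1 hN.1.2

theorem IsPFN.snd_nonneg {N : ℝ × ℝ} (hN : IsPFN N) : 0 ≤ N.2 :=
  hN.2.1.1

/-- Scalar multiplication distributes over Pythagorean addition. -/
theorem pfSmul_pfAdd (M N : ℝ × ℝ) (hM : IsPFN M) (hN : IsPFN N) (α : ℝ) (hα : 0 < α) :
    pfSmul α (pfAdd M N) = pfAdd (pfSmul α M) (pfSmul α N) :=
  pfSmul_pfAdd_general hM.fst_sq_le_one hM.snd_nonneg hN.fst_sq_le_one hN.snd_nonneg hα.le
end

section
/- Scalar multiplication of Pythagorean fuzzy numbers is monotone with respect to the order ≤_(m,ES): for M, N ∈ L and any real α > 0, if M ≤_(m,ES) N then α·M ≤_(m,ES) α·N. -/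
/-- The relation `≤_(m,ES)` on `L`. -/
noncomputable def leME (N M : ℝ × ℝ) : Prop :=
  N.1 < M.1 ∨ (N.1 = M.1 ∧ ES N ≤ ES M)

theorem strictMonoOn_sqrt_one_sub_one_sub_sq_rpow {α : ℝ} (hα : 0 < α) :
    StrictMonoOn (fun m : ℝ ↦ √(1 - (1 - m ^ 2) ^ α)) (Set.Icc 0 1) := by
  intro m hm n hn hmn
  have hm_sq : m ^ 2 ≤ 1 := pow_le_one₀ hm.1 hm.2
  have hn_sq : n ^ 2 ≤ 1 := pow_le_one₀ hn.1 hn.2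
  have hmn_sq : m ^ 2 < n ^ 2 := pow_lt_pow_left₀ hmn hm.1 two_ne_zero
  have hlt : (1 - n ^ 2) ^ α < (1 - m ^ 2) ^ α :=
    Real.rpow_lt_rpow (sub_nonneg.2 hn_sq) (sub_lt_sub_left hmn_sq 1) hα
  have hle_one : (1 - m ^ 2) ^ α ≤ 1 :=
    Real.rpow_le_one (sub_nonneg.2 hm_sq) (sub_le_self 1 (sq_nonneg m)) hα.le
  exact Real.sqrt_lt_sqrt (sub_nonneg.2 hle_one) (sub_lt_sub_left hlt 1)

theorem pfSmul_fst_lt_pfSmul_fst {M N : ℝ × ℝ} {α : ℝ} (hα : 0 < α) (hM : 0 ≤ M.1)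
    (hN : N.1 ≤ 1) (h : M.1 < N.1) : (pfSmul α M).1 < (pfSmul α N).1 :=
  strictMonoOn_sqrt_one_sub_one_sub_sq_rpow hα ⟨hM, h.le.trans hN⟩ ⟨hM.trans h.le, hN⟩ h

theorem pfSmul_fst_congr {M N : ℝ × ℝ} (α : ℝ) (h : M.1 = N.1) :
    (pfSmul α M).1 = (pfSmul α N).1 := by
  simp only [pfSmul, h]

theorem ES_le_ES_iff_of_fst_eq {M N : ℝ × ℝ} (h : M.1 = N.1) (hM : 0 ≤ M.2) (hN : 0 ≤ N.2) :
    ES M ≤ ES N ↔ N.2 ≤ M.2 := by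
  rw [← sq_le_sq₀ hN hM, ES, ES, h]
  constructor <;> intro _ <;> linarith

theorem ES_pfSmul_le_ES_pfSmul_of_fst_eq {M N : ℝ × ℝ} {α : ℝ} (hα : 0 ≤ α) (h : M.1 = N.1)
    (hM : 0 ≤ M.2) (hN : 0 ≤ N.2) (hES : ES M ≤ ES N) : ES (pfSmul α M) ≤ ES (pfSmul α N) := by
  have hsnd : N.2 ≤ M.2 := (ES_le_ES_iff_of_fst_eq h hM hN).1 hES
  exact (ES_le_ES_iff_of_fst_eq (pfSmul_fst_congr α h) (Real.rpow_nonneg hM α)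
    (Real.rpow_nonneg hN α)).2 (Real.rpow_le_rpow hN hsnd hα)

theorem pfSmul_mono_general {M N : ℝ × ℝ} (hM₁ : 0 ≤ M.1) (hM₂ : 0 ≤ M.2) (hN₁ : N.1 ≤ 1)
    (hN₂ : 0 ≤ N.2) {α : ℝ} (hα : 0 < α) (h : leME M N) : leME (pfSmul α M) (pfSmul α N) := by
  rcases h with hlt | ⟨heq, hES⟩
  · exact Or.inl (pfSmul_fst_lt_pfSmul_fst hα hM₁ hN₁ hlt)
  · exact Or.inr ⟨pfSmul_fst_congr α heq,
      ES_pfSmul_le_ES_pfSmul_of_fst_eq hα.le heq hM₂ hN₂ hES⟩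

/-- Scalar multiplication is monotone with respect to `≤_(m,ES)`. -/
theorem pfSmul_mono (M N : ℝ × ℝ) (hM : IsPFN M) (hN : IsPFN N) (α : ℝ) (hα : 0 < α)
    (h : leME M N) : leME (pfSmul α M) (pfSmul α N) :=
  pfSmul_mono_general hM.1.1 hM.2.1.1 hN.1.2 hN.2.1.1 hα h
end

section
/- Scalar multiplication of a fixed Pythagorean fuzzy number is monotone in the scalar with respect to the order ≤_(m,ES): for M ∈ L and reals 0 < α₁ ≤ α₂, one has α₁·M ≤_(m,ES) α₂·M. -/
theorem leME_of_fst_le_of_abs_snd_le {N M : ℝ × ℝ} (hfst : N.1 ≤ M.1) (hsnd : |M.2| ≤ |N.2|) :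
    leME N M := by
  refine hfst.lt_or_eq.imp_right fun heq => ⟨heq, ?_⟩
  have hsq : M.2 ^ 2 ≤ N.2 ^ 2 := sq_le_sq.mpr hsnd
  unfold ES
  rw [heq]
  linarith

theorem monotoneOn_pfSmul_fst {M : ℝ × ℝ} (hM : |M.1| ≤ 1) :
    MonotoneOn (fun α => (pfSmul α M).1) (Set.Ici 0) := by
  intro α hα β _ hαβ
  have hbase_nonneg : 0 ≤ 1 - M.1 ^ 2 := sub_nonneg.mpr ((sq_le_one_iff_abs_le_one _).mpr hM)
  have hbase_le_one : 1 - M.1 ^ 2 ≤ 1 := sub_le_self 1 (sq_nonneg M.1)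
  have hpow : (1 - M.1 ^ 2) ^ β ≤ (1 - M.1 ^ 2) ^ α :=
    Real.rpow_le_rpow_of_exponent_ge' hbase_nonneg hbase_le_one hα hαβ
  exact Real.sqrt_le_sqrt (sub_le_sub_left hpow 1)

theorem antitoneOn_pfSmul_snd {M : ℝ × ℝ} (hM : M.2 ∈ Set.Icc (0 : ℝ) 1) :
    AntitoneOn (fun α => (pfSmul α M).2) (Set.Ici 0) :=
  fun _ hα _ _ hαβ => Real.rpow_le_rpow_of_exponent_ge' hM.1 hM.2 hα hαβ

theorem pfSmul_snd_nonneg {M : ℝ × ℝ} (hM : 0 ≤ M.2) (α : ℝ) : 0 ≤ (pfSmul α M).2 :=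
  Real.rpow_nonneg hM α

theorem pfSmul_mono_scalar_general {M : ℝ × ℝ} (hfst : |M.1| ≤ 1)
    (hsnd : M.2 ∈ Set.Icc (0 : ℝ) 1) {α₁ α₂ : ℝ} (h₁ : 0 ≤ α₁) (h₁₂ : α₁ ≤ α₂) :
    leME (pfSmul α₁ M) (pfSmul α₂ M) := by
  have h₂ : 0 ≤ α₂ := h₁.trans h₁₂
  apply leME_of_fst_le_of_abs_snd_le
  · exact monotoneOn_pfSmul_fst hfst h₁ h₂ h₁₂
  · exact abs_le_abs_of_nonneg (pfSmul_snd_nonneg hsnd.1 α₂)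
      (antitoneOn_pfSmul_snd hsnd h₁ h₂ h₁₂)

/-- Scalar multiplication of a fixed PFN is monotone in the scalar w.r.t. `≤_(m,ES)`. -/
theorem pfSmul_mono_scalar (M : ℝ × ℝ) (hM : IsPFN M) (α₁ α₂ : ℝ) (h₁ : 0 < α₁)
    (h₁₂ : α₁ ≤ α₂) : leME (pfSmul α₁ M) (pfSmul α₂ M) :=
  have ⟨hfst, hsnd, _⟩ := hM
  pfSmul_mono_scalar_general ((abs_of_nonneg hfst.1).trans_le hfst.2) hsnd h₁.le h₁₂
end
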